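/- Every instance I = (G, N, 𝒰) of connected fair division in which G = (V, E) is a tree with at least n vertices admits a maximin share allocation, i.e., a valid allocation π with u_i(π(i)) ≥ mms_i(I) for every player i ∈ N. -/

import Mathlib

/-!
A moving-knife argument on forests. Fix for each player `i` a connected partition `P i` attaining
her maximin share `q i`. The players are served one at a time, keeping the invariant that, for every
unserved player, at least as many parts of her own partition survive inside the set `W` of remaining
items as there are unserved players.

Call `D ⊆ W` a *branch* if it is connected and is attached to the rest of `W` through at most one
vertex `v ∈ D` (`IsGate`). Some branch is worth `q i` to some unserved player `i`: extend one of her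
surviving parts to a component of `W`. Give `i` a minimal such branch `D`, with gate `v`. If a part
`A` of another unserved player `j` meets `D` but avoids `v`, then `A` cannot cross the gate, so it
lies in a component `C` of `D \ {v}`; since the graph is acyclic, `v` has at most one neighbour in
`C`, so `C` is a smaller branch worth at least `q j` to `j`, contradicting minimality. Hence every
part that is destroyed contains `v`, and as parts are disjoint each player loses at most one.
-/

/-- The total utility of a set of items under an additive utility function `u`. -/
noncomputable def setVal {V : Type*} (u : V → ℚ) (X : Set V) : ℚ := ∑ᶠ x ∈ X, u x

/-- A set of items induces a connected subgraph of `G`. -/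
def ConnOn {V : Type*} (G : SimpleGraph V) (X : Set V) : Prop := (G.induce X).Connected

/-- A (possibly empty) bundle is connected in `G`. -/
def PreconnOn {V : Type*} (G : SimpleGraph V) (X : Set V) : Prop := (G.induce X).Preconnected

/-- An allocation is valid if every bundle is connected in `G` and bundles are
pairwise disjoint. -/
def ValidAlloc {V N : Type*} (G : SimpleGraph V) (π : N → Set V) : Prop :=
  (∀ i, PreconnOn G (π i)) ∧ ∀ i j, i ≠ j → Disjoint (π i) (π j)

/-- A partition of the whole vertex set into `n` nonempty parts, each inducing a
connected subgraph of `G`. -/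
def IsConnPartition {V : Type*} {n : ℕ} (G : SimpleGraph V) (P : Fin n → Set V) : Prop :=
  (∀ j, (P j).Nonempty) ∧ (∀ j, ConnOn G (P j)) ∧
    (∀ j k, j ≠ k → Disjoint (P j) (P k)) ∧ (⋃ j, P j) = Set.univ

theorem setVal_mono_of_nonneg {V : Type*} [Fintype V] {u : V → ℚ} (hu : ∀ v, 0 ≤ u v)
    {X Y : Set V} (h : X ⊆ Y) : setVal u X ≤ setVal u Y := by
  classical
  unfold setVal
  rw [finsum_mem_eq_toFinset_sum, finsum_mem_eq_toFinset_sum]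
  exact Finset.sum_le_sum_of_subset_of_nonneg (Set.toFinset_subset_toFinset.mpr h)
    fun v _ _ => hu v

theorem exists_adj_of_connOn_not_subset {V : Type*} {G : SimpleGraph V} {A D : Set V}
    (hA : ConnOn G A) {x y : V} (hxA : x ∈ A) (hxD : x ∈ D) (hyA : y ∈ A) (hyD : y ∉ D) :
    ∃ a ∈ A, ∃ b ∈ A, a ∈ D ∧ b ∉ D ∧ G.Adj a b := by
  obtain ⟨p⟩ := hA.preconnected ⟨x, hxA⟩ ⟨y, hyA⟩
  obtain ⟨d, -, h1, h2⟩ := p.exists_boundary_dart {z | (z : V) ∈ D} hxD hyD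
  exact ⟨d.fst, d.fst.2, d.snd, d.snd.2, h1, h2, d.adj⟩

theorem eq_of_adj_of_connOn {V : Type*} {G : SimpleGraph V} (hG : G.IsAcyclic) {C : Set V}
    (hC : ConnOn G C) {v a b : V} (hv : v ∉ C) (ha : a ∈ C) (hb : b ∈ C)
    (hav : G.Adj a v) (hbv : G.Adj b v) : a = b := by
  classical
  by_contra hab
  obtain ⟨p, hp⟩ := (hC.preconnected ⟨a, ha⟩ ⟨b, hb⟩).exists_isPath
  let f := SimpleGraph.Embedding.induce (G := G) C
  obtain ⟨p', hp', hsupp⟩ : ∃ p' : G.Walk a b, p'.IsPath ∧ ∀ z ∈ p'.support, z ∈ C := by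
    refine ⟨p.map f.toHom, hp.map f.injective, fun z hz => ?_⟩
    obtain ⟨z, -, rfl⟩ := List.mem_map.mp (SimpleGraph.Walk.support_map f.toHom p ▸ hz)
    exact z.2
  let r : G.Walk a b := .cons hav (.cons hbv.symm .nil)
  have hr : r.IsPath := by
    simp [r, SimpleGraph.Walk.cons_isPath_iff, hav.ne, hbv.ne', hab]
  have h : r = p' :=
    congrArg Subtype.val ((hG.subsingleton_path a b).elim ⟨r, hr⟩ ⟨p', hp'⟩)
  exact hv (hsupp v (h ▸ by simp [r]))

/-- A nonempty connected subset of `X` extends to a connected component of `X`, described as a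
connected set with no edge to the rest of `X`. -/
theorem exists_component {V : Type*} [Finite V] {G : SimpleGraph V} {A X : Set V}
    (hA : ConnOn G A) (hAX : A ⊆ X) :
    ∃ C, ConnOn G C ∧ A ⊆ C ∧ C ⊆ X ∧ ∀ x ∈ C, ∀ y ∈ X, y ∉ C → ¬ G.Adj x y := by
  obtain ⟨C, hAC, hC⟩ := Finite.exists_le_maximal (p := fun B : Set V => ConnOn G B ∧ B ⊆ X)
    ⟨hA, hAX⟩
  refine ⟨C, hC.prop.1, hAC, hC.prop.2, fun x hx y hy hyC hxy => hyC ?_⟩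
  have hconn : ConnOn G (C ∪ {y}) :=
    SimpleGraph.connected_induce_union hC.prop.1.preconnected
      (SimpleGraph.Preconnected.of_subsingleton) hx rfl hxy
  exact hC.le_of_ge (y := C ∪ {y})
    ⟨hconn, Set.union_subset hC.prop.2 (by simpa using hy)⟩ Set.subset_union_left (by simp)

/-- `v ∈ D` is a gate of `D` in `W` if every edge between `D` and `W \ D` starts at `v`. -/
def IsGate {V : Type*} (G : SimpleGraph V) (W D : Set V) (v : V) : Prop :=
  v ∈ D ∧ ∀ x ∈ D, ∀ y ∈ W, y ∉ D → G.Adj x y → x = v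

/-- A branch of `W` is a connected subset of `W` that has a gate. -/
def IsBranch {V : Type*} (G : SimpleGraph V) (W D : Set V) : Prop :=
  ConnOn G D ∧ D ⊆ W ∧ ∃ v, IsGate G W D v

theorem exists_isBranch {V : Type*} [Finite V] {G : SimpleGraph V} {A W : Set V}
    (hA : ConnOn G A) (hAW : A ⊆ W) : ∃ D, IsBranch G W D ∧ A ⊆ D := by
  obtain ⟨C, hC, hAC, hCW, hno⟩ := exists_component hA hAW
  obtain ⟨⟨v, hv⟩⟩ := hC.nonempty
  exact ⟨C, ⟨hC, hCW, v, hv, fun x hx y hy hyC h => (hno x hx y hy hyC h).elim⟩, hAC⟩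

/-- A connected subset of `W` that meets a branch `D` and avoids its gate lies in a strictly smaller
branch. -/
theorem exists_smaller_branch {V : Type*} [Finite V] {G : SimpleGraph V} (hG : G.IsAcyclic)
    {A W D : Set V} {v : V} (hDW : D ⊆ W) (hv : IsGate G W D v) (hA : ConnOn G A) (hAW : A ⊆ W)
    (hmeet : ¬ Disjoint A D) (hvA : v ∉ A) :
    ∃ C, IsBranch G W C ∧ A ⊆ C ∧ C < D := by
  obtain ⟨x, hxA, hxD⟩ := Set.not_disjoint_iff.mp hmeet
  have hAD : A ⊆ D \ {v} := by
    intro y hy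
    refine ⟨?_, fun h => hvA (h ▸ hy)⟩
    by_contra hyD
    obtain ⟨a, ha, b, hb, haD, hbD, hab⟩ := exists_adj_of_connOn_not_subset hA hxA hxD hy hyD
    exact hvA (hv.2 a haD b (hAW hb) hbD hab ▸ ha)
  obtain ⟨C, hC, hAC, hCD, hno⟩ := exists_component hA hAD
  have hvC : v ∉ C := fun h => (hCD h).2 rfl
  -- Every edge leaving `C` inside `W` ends at `v`.
  have hout : ∀ x ∈ C, ∀ y ∈ W, y ∉ C → G.Adj x y → y = v := by
    intro x hx y hy hyC hxy
    by_contra hyv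
    by_cases hyD : y ∈ D
    · exact hno x hx y ⟨hyD, hyv⟩ hyC hxy
    · exact (hCD hx).2 (hv.2 x (hCD hx).1 y hy hyD hxy)
  refine ⟨C, ⟨hC, fun z hz => hDW (hCD hz).1, ?_⟩, hAC,
    ⟨fun z hz => (hCD hz).1, fun h => hvC (h hv.1)⟩⟩
  by_cases hw : ∃ w ∈ C, G.Adj w v
  · obtain ⟨w, hwC, hwv⟩ := hw
    refine ⟨w, hwC, fun x hx y hy hyC hxy => ?_⟩
    have := hout x hx y hy hyC hxy
    subst this
    exact eq_of_adj_of_connOn hG hC hvC hx hwC hxy hwv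
  · refine ⟨x, hAC hxA, fun x hx y hy hyC hxy => ?_⟩
    have := hout x hx y hy hyC hxy
    subst this
    exact (hw ⟨x, hx, hxy⟩).elim

/-- The serving procedure: if each unserved player `i ∈ S` still has at least `|S|` of her parts
inside `W`, then `W` can be shared among the players of `S`. -/
theorem exists_alloc_of_surviving_parts {V N ι : Type*} [Fintype V] [Fintype ι] [DecidableEq N]
    {G : SimpleGraph V} (hG : G.IsAcyclic) (u : N → V → ℚ) (hnn : ∀ i v, 0 ≤ u i v)
    (q : N → ℚ) (P : N → ι → Set V) (hconn : ∀ i a, ConnOn G (P i a))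
    (hdisj : ∀ i a b, a ≠ b → Disjoint (P i a) (P i b))
    (hq : ∀ i a, q i ≤ setVal (u i) (P i a)) (k : ℕ) :
    ∀ (S : Finset N) (W : Set V), S.card = k →
      (∀ i ∈ S, k ≤ {a | P i a ⊆ W}.ncard) →
      ∃ π : N → Set V,
        (∀ i ∈ S, PreconnOn G (π i) ∧ π i ⊆ W ∧ q i ≤ setVal (u i) (π i)) ∧
        ∀ i ∈ S, ∀ j ∈ S, i ≠ j → Disjoint (π i) (π j) := by
  induction k with
  | zero =>
    intro S W hS _
    rw [Finset.card_eq_zero] at hS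
    subst hS
    exact ⟨fun _ => ∅, by simp, by simp⟩
  | succ k ih =>
    intro S W hS hparts
    have hex : ∃ D : Set V, IsBranch G W D ∧ ∃ i ∈ S, q i ≤ setVal (u i) D := by
      obtain ⟨i, hi⟩ : S.Nonempty := Finset.card_pos.mp (by omega)
      obtain ⟨a, ha⟩ : {a | P i a ⊆ W}.Nonempty :=
        (Set.ncard_pos (Set.toFinite _)).mp (by have := hparts i hi; omega)
      obtain ⟨D, hD, hAD⟩ := exists_isBranch (hconn i a) ha
      exact ⟨D, hD, i, hi, (hq i a).trans (setVal_mono_of_nonneg (hnn i) hAD)⟩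
    obtain ⟨D₀, hD₀⟩ := hex
    obtain ⟨D, -, hD⟩ := Finite.exists_le_minimal
      (p := fun D : Set V => IsBranch G W D ∧ ∃ i ∈ S, q i ≤ setVal (u i) D) hD₀
    obtain ⟨⟨hDconn, hDW, v, hv⟩, i, hi, hiD⟩ := hD.prop
    have hgate : ∀ j ∈ S, ∀ a, P j a ⊆ W → ¬ Disjoint (P j a) D → v ∈ P j a := by
      intro j hj a ha hmeet
      by_contra hva
      obtain ⟨C, hC, hAC, hlt⟩ := exists_smaller_branch hG hDW hv (hconn j a) ha hmeet hva
      exact hD.not_prop_of_lt hlt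
        ⟨hC, j, hj, (hq j a).trans (setVal_mono_of_nonneg (hnn j) hAC)⟩
    obtain ⟨π, hπ, hπd⟩ := ih (S.erase i) (W \ D) (by rw [Finset.card_erase_of_mem hi]; omega) (by
      intro j hj
      have hjS := Finset.mem_of_mem_erase hj
      have hsub : {a | P j a ⊆ W} ⊆ {a | P j a ⊆ W \ D} ∪ {a | v ∈ P j a} := by
        intro a ha
        by_cases hd : Disjoint (P j a) D
        · exact Or.inl (Set.subset_sdiff.mpr ⟨ha, hd⟩)
        · exact Or.inr (hgate j hjS a ha hd)
      have hone : {a | v ∈ P j a}.ncard ≤ 1 := by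
        rw [Set.ncard_le_one (Set.toFinite _)]
        intro a ha b hb
        by_contra hab
        exact Set.disjoint_left.mp (hdisj j a b hab) ha hb
      have h1 := Set.ncard_le_ncard hsub (Set.toFinite _)
      have h2 := Set.ncard_union_le {a | P j a ⊆ W \ D} {a | v ∈ P j a}
      have h3 := hparts j hjS
      omega)
    have hdD : ∀ j ∈ S, j ≠ i → Disjoint D (π j) := fun j hj hji =>
      (Set.subset_sdiff.mp (hπ j (Finset.mem_erase.mpr ⟨hji, hj⟩)).2.1).2.symm
    refine ⟨Function.update π i D, fun j hj => ?_, fun j hj l hl hjl => ?_⟩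
    · by_cases hji : j = i
      · subst hji
        simpa using ⟨hDconn.preconnected, hDW, hiD⟩
      · obtain ⟨h1, h2, h3⟩ := hπ j (Finset.mem_erase.mpr ⟨hji, hj⟩)
        simpa [hji] using ⟨h1, h2.trans Set.sdiff_subset, h3⟩
    · by_cases hji : j = i
      · subst hji
        simpa [hjl.symm] using hdD l hl hjl.symm
      · by_cases hli : l = i
        · subst hli
          simpa [hjl] using (hdD j hj hjl).symm
        · simpa [hji, hli] using hπd j (Finset.mem_erase.mpr ⟨hji, hj⟩) l
            (Finset.mem_erase.mpr ⟨hli, hl⟩) hjl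

/-- Every CFD instance on a tree with at least `n` vertices admits a maximin share
allocation: a valid allocation `π` with `u_i(π(i)) ≥ mms_i(I)` for all `i` (here
`u_i(π(i)) ≥ mms_i(I)` is expressed as: for every partition of the items into
`n` nonempty connected parts, player `i` values her bundle at least as much as some part). -/
theorem mms_allocation_exists_on_tree {V N : Type*} [Fintype V] [Fintype N] [Nonempty N]
    (G : SimpleGraph V) (hG : G.IsTree)
    (hcard : Fintype.card N ≤ Fintype.card V)
    (u : N → V → ℚ) (hnn : ∀ i v, 0 ≤ u i v) (hsum : ∀ i, ∑ v, u i v = 1) :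
    ∃ π : N → Set V, ValidAlloc G π ∧
      ∀ i : N, ∀ P : Fin (Fintype.card N) → Set V, IsConnPartition G P →
        ∃ j, setVal (u i) (P j) ≤ setVal (u i) (π i) := by
  classical
  by_cases hne : ∃ P : Fin (Fintype.card N) → Set V, IsConnPartition G P
  swap
  · -- Without any connected partition the maximin condition is vacuous.
    refine ⟨fun _ => ∅, ⟨fun _ x => x.2.elim, by simp⟩, fun _ P hP => (hne ⟨P, hP⟩).elim⟩
  have : Nonempty (Fin (Fintype.card N)) := ⟨⟨0, Fintype.card_pos⟩⟩
  let share (i : N) (P : Fin (Fintype.card N) → Set V) : ℚ :=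
    Finset.univ.inf' Finset.univ_nonempty fun j => setVal (u i) (P j)
  have hmax : ∀ i, ∃ P, IsConnPartition G P ∧ ∀ Q, IsConnPartition G Q → share i Q ≤ share i P :=
    fun i => Set.exists_max_image {P | IsConnPartition G P} (share i) (Set.toFinite _) hne
  choose P hP hPmax using hmax
  obtain ⟨π, hπ, hπd⟩ := exists_alloc_of_surviving_parts hG.isAcyclic u hnn
    (fun i => share i (P i)) P (fun i => (hP i).2.1) (fun i => (hP i).2.2.1)
    (fun i a => Finset.inf'_le _ (Finset.mem_univ a)) (Fintype.card N) Finset.univ Set.univ rfl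
    (by simp [Set.ncard_univ])
  refine ⟨π, ⟨fun i => (hπ i (Finset.mem_univ i)).1,
    fun i j => hπd i (Finset.mem_univ i) j (Finset.mem_univ j)⟩, fun i Q hQ => ?_⟩
  obtain ⟨j, -, hj⟩ := Finset.exists_mem_eq_inf' Finset.univ_nonempty
    fun j => setVal (u i) (Q j)
  exact ⟨j, hj ▸ (hPmax i Q hQ).trans (hπ i (Finset.mem_univ i)).2.2⟩
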